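/- If 𝒟 is a subclass of the class ℱ of all k×k filter matrices and every filter matrix in 𝒟 is identifiable (𝒟 ⊆ 𝓘), then every filter matrix in the closure 𝒟̄ is identifiable (𝒟̄ ⊆ 𝓘). -/

import Mathlib

open scoped BigOperators Classical

namespace FilteredMarkov

variable {k : ℕ}

/-- Probability of a complete realization `x` of the chain (of length `n+1`,
i.e. with `n` transitions), given the known initial state `s`, under the
transition probabilities `p`. -/
noncomputable def chainProb {n : ℕ} (p : Fin k → Fin k → ℝ) (s : Fin k)
    (x : Fin (n + 1) → Fin k) : ℝ :=
  (if x 0 = s then (1 : ℝ) else 0) * ∏ i : Fin n, p (x i.castSucc) (x i.succ)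

/-- Extension of a finite realization to all of `ℕ` (values beyond the range
are junk, obtained by reducing the index mod `n+1`). -/
def extChain {n : ℕ} (x : Fin (n + 1) → Fin k) : ℕ → Fin k :=
  fun t => x ⟨t % (n + 1), Nat.mod_lt _ (Nat.succ_pos n)⟩

/-- The filtered chain `φ_F(x)`: the state at position `t` is retained if the
transition into it (`f_{x_{t-1}, x_t} = 1`) or out of it (`f_{x_t, x_{t+1}} = 1`)
is recorded by the filter matrix `F`; otherwise it is replaced by a blank (`none`). -/
def phi {n : ℕ} (F : Fin k → Fin k → Bool) (x : Fin (n + 1) → Fin k) :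
    Fin (n + 1) → Option (Fin k) :=
  fun t =>
    if (0 < (t : ℕ) ∧ F (extChain x ((t : ℕ) - 1)) (x t) = true) ∨
        ((t : ℕ) + 1 < n + 1 ∧ F (x t) (extChain x ((t : ℕ) + 1)) = true)
    then some (x t) else none

/-- The probability distribution of the filtered chain `φ_F(X)` (as a probability
mass function on possible filtered sequences), for a chain of length `n+1` with
known initial state `s` and transition probabilities `p`. -/
noncomputable def obsDist (n : ℕ) (p : Fin k → Fin k → ℝ) (s : Fin k)
    (F : Fin k → Fin k → Bool) : (Fin (n + 1) → Option (Fin k)) → ℝ :=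
  fun y => ∑ x : Fin (n + 1) → Fin k, if phi F x = y then chainProb p s x else 0

/-- The parameter space: all the transition probabilities are strictly between
0 and 1 and each row of the transition probability matrix sums to 1. -/
def IsParam (p : Fin k → Fin k → ℝ) : Prop :=
  (∀ i j, 0 < p i j ∧ p i j < 1) ∧ ∀ i, ∑ j, p i j = 1

/-- A filter matrix `F` is identifiable (`F ∈ 𝓘`) if any two distinct values of the
parameter `θ` (the transition probabilities) induce distinct probability
distributions of the filtered chain `φ_F(X)` (for a sufficiently long chain). -/
def Identifiable (k : ℕ) (F : Fin k → Fin k → Bool) : Prop :=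
  ∀ p q : Fin k → Fin k → ℝ, IsParam p → IsParam q → p ≠ q →
    ∃ (n : ℕ) (s : Fin k), obsDist n p s F ≠ obsDist n q s F

lemma phi_some {n : ℕ} {F : Fin k → Fin k → Bool} {x x' : Fin (n + 1) → Fin k}
    (h : phi F x = phi F x') (t : Fin (n + 1))
    (ht : (0 < (t : ℕ) ∧ F (extChain x ((t : ℕ) - 1)) (x t) = true) ∨
        ((t : ℕ) + 1 < n + 1 ∧ F (x t) (extChain x ((t : ℕ) + 1)) = true)) :
    x' t = x t := by
  have h1 := congrFun h t
  unfold phi at h1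
  rw [if_pos ht] at h1
  split_ifs at h1 with h2
  exact (Option.some.inj h1).symm

lemma extChain_of_lt {n : ℕ} (x : Fin (n + 1) → Fin k) (t : ℕ) (ht : t < n + 1) :
    extChain x t = x ⟨t, ht⟩ := by
  unfold extChain
  congr 1
  exact Fin.ext (Nat.mod_eq_of_lt ht)

lemma pair_eq {n : ℕ} {F : Fin k → Fin k → Bool} {x x' : Fin (n + 1) → Fin k}
    (h : phi F x = phi F x') (t : ℕ) (ht : t + 1 < n + 1)
    (hF : F (x ⟨t, by omega⟩) (x ⟨t + 1, ht⟩) = true) :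
    x' ⟨t, by omega⟩ = x ⟨t, by omega⟩ ∧ x' ⟨t + 1, ht⟩ = x ⟨t + 1, ht⟩ := by
  constructor
  · apply phi_some h
    right
    refine ⟨ht, ?_⟩
    rw [extChain_of_lt x _ ht]
    exact hF
  · apply phi_some h
    left
    refine ⟨Nat.succ_pos t, ?_⟩
    have : extChain x (t + 1 - 1) = x ⟨t, by omega⟩ := extChain_of_lt x t (by omega)
    rw [this]
    exact hF

lemma kept {n : ℕ} {D F : Fin k → Fin k → Bool} (hDF : ∀ i j, D i j = true → F i j = true)
    {x x' : Fin (n + 1) → Fin k} (h : phi F x = phi F x') (t : Fin (n + 1))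
    (ht : (0 < (t : ℕ) ∧ D (extChain x ((t : ℕ) - 1)) (x t) = true) ∨
        ((t : ℕ) + 1 < n + 1 ∧ D (x t) (extChain x ((t : ℕ) + 1)) = true)) :
    ((0 < (t : ℕ) ∧ D (extChain x' ((t : ℕ) - 1)) (x' t) = true) ∨
        ((t : ℕ) + 1 < n + 1 ∧ D (x' t) (extChain x' ((t : ℕ) + 1)) = true)) ∧ x' t = x t := by
  obtain ⟨t, htn⟩ := t
  rcases ht with ⟨h0, hd⟩ | ⟨h0, hd⟩
  · obtain ⟨u, rfl⟩ : ∃ u, t = u + 1 := ⟨t - 1, by simp at h0; omega⟩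
    simp only [Nat.add_sub_cancel] at hd ⊢
    rw [extChain_of_lt x u (by omega)] at hd
    obtain ⟨e1, e2⟩ := pair_eq h u htn (hDF _ _ hd)
    refine ⟨Or.inl ⟨h0, ?_⟩, e2⟩
    rw [extChain_of_lt x' u (by omega), e1, e2]
    exact hd
  · simp only at h0 hd ⊢
    rw [extChain_of_lt x _ h0] at hd
    obtain ⟨e1, e2⟩ := pair_eq h t h0 (hDF _ _ hd)
    refine ⟨Or.inr ⟨h0, ?_⟩, e1⟩
    rw [extChain_of_lt x' _ h0, e1, e2]
    exact hd

lemma phi_factors {n : ℕ} {D F : Fin k → Fin k → Bool}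
    (hDF : ∀ i j, D i j = true → F i j = true)
    {x x' : Fin (n + 1) → Fin k} (h : phi F x = phi F x') : phi D x = phi D x' := by
  funext t
  unfold phi
  split_ifs with h1 h2 h2
  · rw [(kept hDF h t h1).2]
  · exact absurd (kept hDF h t h1).1 h2
  · exact absurd (kept hDF h.symm t h2).1 h1
  · rfl

lemma obsDist_factor {n : ℕ} {D F : Fin k → Fin k → Bool}
    (hDF : ∀ i j, D i j = true → F i j = true) :
    ∃ g : (Fin (n + 1) → Option (Fin k)) → (Fin (n + 1) → Option (Fin k)),
      ∀ (p : Fin k → Fin k → ℝ) (s : Fin k) (y : Fin (n + 1) → Option (Fin k)),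
        obsDist n p s D y = ∑ z, if g z = y then obsDist n p s F z else 0 := by
  have hf : Function.FactorsThrough (phi D (n := n)) (phi F) := fun x x' h => phi_factors hDF h
  refine ⟨Function.extend (phi F) (phi D) (fun _ _ => none), fun p s y => ?_⟩
  unfold obsDist
  simp_rw [← Finset.sum_filter (fun z => Function.extend (phi F) (phi D) (fun _ _ => none) z = y)]
  rw [Finset.sum_comm]
  refine Finset.sum_congr rfl fun x _ => ?_
  rw [Finset.sum_ite_eq]
  simp only [Finset.mem_filter, Finset.mem_univ, true_and, hf.extend_apply]

/-- If `𝒟` is a subclass of the class of all `k × k` filter matrices and every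
filter matrix in `𝒟` is identifiable (`𝒟 ⊆ 𝓘`), then every filter matrix in the
closure `𝒟̄ = {F : F ⪰ D for some D ∈ 𝒟}` is identifiable (`𝒟̄ ⊆ 𝓘`). -/
theorem statement_3 {k : ℕ} (𝒟 : Set (Fin k → Fin k → Bool))
    (h𝒟 : ∀ D ∈ 𝒟, Identifiable k D) :
    ∀ F : Fin k → Fin k → Bool,
      (∃ D ∈ 𝒟, ∀ i j, D i j = true → F i j = true) → Identifiable k F := by
  rintro F ⟨D, hD, hDF⟩ p q hp hq hpq
  obtain ⟨n, s, hne⟩ := h𝒟 D hD p q hp hq hpq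
  refine ⟨n, s, fun he => hne ?_⟩
  obtain ⟨g, hg⟩ := obsDist_factor (n := n) hDF
  funext y
  rw [hg, hg, he]

end FilteredMarkov
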